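/- Let Δ ⊆ ℝ² be a 2-dimensional reflexive polytope. Then v(Δ) + v(Δ*) = 12. -/

import Mathlib

open MeasureTheory Filter Pointwise

noncomputable section

/-- The canonical embedding of a lattice point of `ℤ^d` into `ℝ^d`. -/
def coeLat {d : ℕ} (n : Fin d → ℤ) : Fin d → ℝ := fun i => (n i : ℝ)

/-- The set of lattice points lying in a subset `S ⊆ ℝ^d`. -/
def latticePoints {d : ℕ} (S : Set (Fin d → ℝ)) : Set (Fin d → ℤ) :=
  {n | coeLat n ∈ S}

/-- A lattice polytope: the convex hull of finitely many points of `ℤ^d`. -/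
def IsLatticePolytope {d : ℕ} (P : Set (Fin d → ℝ)) : Prop :=
  ∃ V : Finset (Fin d → ℤ), P = convexHull ℝ (coeLat '' (V : Set (Fin d → ℤ)))

/-- The dual (polar) body `P* = {y | ⟨y,x⟩ ≥ -1 ∀ x ∈ P}`. -/
def polarDual {d : ℕ} (P : Set (Fin d → ℝ)) : Set (Fin d → ℝ) :=
  {y | ∀ x ∈ P, -1 ≤ ∑ i, y i * x i}

/-- Dimension of a subset of `ℝ^d`: the dimension of its affine span. -/
def dimSet {d : ℕ} (S : Set (Fin d → ℝ)) : ℕ :=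
  Module.finrank ℝ (affineSpan ℝ S).direction

/-- A reflexive polytope: a lattice polytope containing the origin in its interior
whose dual is again a lattice polytope. -/
def IsReflexive {d : ℕ} (P : Set (Fin d → ℝ)) : Prop :=
  IsLatticePolytope P ∧ (0 : Fin d → ℝ) ∈ interior P ∧ IsLatticePolytope (polarDual P)

/-- A (nonempty, exposed) face of dimension `k` of a polytope `P`. -/
def IsFaceOfDim {d : ℕ} (P : Set (Fin d → ℝ)) (k : ℕ) (θ : Set (Fin d → ℝ)) : Prop :=
  IsExposed ℝ P θ ∧ θ.Nonempty ∧ dimSet θ = k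

/-- The dual face `θ* = {y ∈ P* | ⟨y,x⟩ = -1 ∀ x ∈ θ}` of a face `θ` of `P`. -/
def dualFace {d : ℕ} (P θ : Set (Fin d → ℝ)) : Set (Fin d → ℝ) :=
  {y ∈ polarDual P | ∀ x ∈ θ, ∑ i, y i * x i = -1}

/-- The normalized volume of a `k`-dimensional lattice polytope `θ ⊆ ℝ^d`:
`lim_{m → ∞} k! ⬝ |mθ ∩ ℤ^d| / m^k`. -/
def normVol {d : ℕ} (k : ℕ) (θ : Set (Fin d → ℝ)) : ℝ :=
  limUnder atTop
    (fun m : ℕ => (Nat.factorial k : ℝ) * (latticePoints ((m : ℝ) • θ)).ncard / (m : ℝ) ^ k)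

/-- Normalized volume of a 2-dimensional compact convex set in `ℝ²`:
twice its Lebesgue area. -/
def v2 (P : Set (Fin 2 → ℝ)) : ℝ := 2 * (volume P).toReal

/-!
A reflexive polygon or its dual contains a pair of opposite nonzero lattice points. Indeed, let
`v`, `w` be lattice points of the polygon that form a basis of `ℤ²` and whose sum is outside it.
Together with a lattice point of the polygon on the line `-v + ℤ w`, or on `-w + ℤ v`, they yield
either such a pair or the triangle with vertices `v`, `w` and `-(v + w)`. If the triangle lies in a
polygon without such a pair, the dual has the points `(2, -1)`, `(-1, 2)` and `(-1, -1)` in dual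
coordinates, so the polygon is small enough for the dual to contain a pair.

A unimodular change of coordinates moves the pair to `(±1, 0)`. The lattice points of the dual then
have first coordinate `-1`, `0` or `1`, so each half of the polygon above or below the axis is a
trapezoid with sides `x = 1 + l * y` and `x = -1 - m * y`, for integers `l` and `m`. Its height is
`h = 1`, or `h = 2` if `l + m = -1`. The dual is the region between the graphs of two piecewise
linear functions, one for each half. So each half contributes `4 * h + (l + m) * h ^ 2` to the
normalized volume of the polygon and `2 / h - (l + m)` to that of the dual, and these add up to `6`
in both cases.
-/

section Lattice

variable {d : ℕ}

lemma coeLat_dotProduct_coeLat (u v : Fin d → ℤ) :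
    coeLat u ⬝ᵥ coeLat v = ((u ⬝ᵥ v : ℤ) : ℝ) :=
  ((Int.castRingHom ℝ).map_dotProduct u v).symm

lemma isClosedEmbedding_coeLat : Topology.IsClosedEmbedding (coeLat (d := d)) :=
  (Isometry.piMap (fun _ : Fin d => ((↑) : ℤ → ℝ))
    fun _ => Real.isometry_intCast).isClosedEmbedding

lemma IsLatticePolytope.isCompact {P : Set (Fin d → ℝ)} (hP : IsLatticePolytope P) :
    IsCompact P := by
  obtain ⟨V, rfl⟩ := hP
  exact (V.finite_toSet.image coeLat).isCompact_convexHull ℝ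

lemma IsLatticePolytope.convex {P : Set (Fin d → ℝ)} (hP : IsLatticePolytope P) :
    Convex ℝ P := by
  obtain ⟨V, rfl⟩ := hP
  exact convex_convexHull ℝ _

lemma IsLatticePolytope.finite_latticePoints {P : Set (Fin d → ℝ)} (hP : IsLatticePolytope P) :
    (latticePoints P).Finite :=
  (isClosedEmbedding_coeLat.isCompact_preimage hP.isCompact).finite_of_discrete

lemma IsLatticePolytope.convexHull_latticePoints {P : Set (Fin d → ℝ)}
    (hP : IsLatticePolytope P) : convexHull ℝ (coeLat '' latticePoints P) = P := by
  refine (convexHull_min (Set.image_preimage_subset _ _) hP.convex).antisymm ?_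
  obtain ⟨V, rfl⟩ := hP
  refine convexHull_mono (Set.image_mono fun v hv => ?_)
  exact subset_convexHull ℝ _ (Set.mem_image_of_mem _ hv)

end Lattice

section Duality

variable {d : ℕ} {P : Set (Fin d → ℝ)}

lemma mem_polarDual_iff {y : Fin d → ℝ} : y ∈ polarDual P ↔ ∀ x ∈ P, -1 ≤ y ⬝ᵥ x :=
  Iff.rfl

lemma polarDual_convexHull (S : Set (Fin d → ℝ)) : polarDual (convexHull ℝ S) = polarDual S := by
  refine Set.Subset.antisymm (fun y hy x hx => hy x (subset_convexHull ℝ S hx)) fun y hy => ?_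
  have hconv : Convex ℝ {x | -1 ≤ y ⬝ᵥ x} :=
    convex_halfSpace_ge (dotProductBilin ℝ ℝ y).isLinear (-1)
  exact fun x hx => convexHull_min hy hconv hx

theorem polarDual_polarDual (hconv : Convex ℝ P) (hclosed : IsClosed P) (hzero : 0 ∈ P) :
    polarDual (polarDual P) = P := by
  refine Set.Subset.antisymm (fun x hx => ?_) fun x hx y hy => ?_
  · by_contra hxP
    obtain ⟨f, c, hfP, hfx⟩ := geometric_hahn_banach_closed_point hconv hclosed hxP
    obtain ⟨w, hw⟩ := (dotProductEquiv ℝ (Fin d)).surjective f.toLinearMap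
    have hw (z : Fin d → ℝ) : f z = w ⬝ᵥ z := (LinearMap.congr_fun hw z).symm
    have hc : 0 < c := by simpa using hfP 0 hzero
    have hmem : -(c⁻¹ • w) ∈ polarDual P := fun z hz => by
      have : c⁻¹ * (w ⬝ᵥ z) ≤ 1 := by
        rw [inv_mul_le_one₀ hc, ← hw]
        exact (hfP z hz).le
      change -1 ≤ -(c⁻¹ • w) ⬝ᵥ z
      rw [neg_dotProduct, smul_dotProduct, smul_eq_mul]
      linarith
    have hle : -1 ≤ x ⬝ᵥ -(c⁻¹ • w) := hx _ hmem
    rw [dotProduct_neg, dotProduct_smul, smul_eq_mul, dotProduct_comm, ← hw, neg_le_neg_iff,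
      inv_mul_le_one₀ hc] at hle
    exact hle.not_gt hfx
  · exact (hy x hx).trans_eq (dotProduct_comm y x)

lemma polarDual_union (S T : Set (Fin d → ℝ)) :
    polarDual (S ∪ T) = polarDual S ∩ polarDual T := by
  ext y
  simp only [mem_polarDual_iff, Set.mem_inter_iff, Set.mem_union, or_imp, forall_and]

lemma IsLatticePolytope.mem_polarDual_iff (hP : IsLatticePolytope P) {y : Fin d → ℝ} :
    y ∈ polarDual P ↔ ∀ v ∈ latticePoints P, -1 ≤ coeLat v ⬝ᵥ y := by
  conv_lhs => rw [← hP.convexHull_latticePoints, polarDual_convexHull]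
  exact Set.forall_mem_image.trans
    (forall₂_congr fun v _ => by rw [dotProduct_comm (coeLat v)]; rfl)

lemma IsLatticePolytope.zero_mem_interior_polarDual (hP : IsLatticePolytope P) :
    0 ∈ interior (polarDual P) := by
  rw [mem_interior_iff_mem_nhds]
  have hnear : ∀ v ∈ latticePoints P, ∀ᶠ y in nhds (0 : Fin d → ℝ), -1 ≤ coeLat v ⬝ᵥ y :=
    fun v _ => (Continuous.dotProduct continuous_const continuous_id).continuousAt.eventually
      (eventually_ge_nhds (by simp))
  filter_upwards [(eventually_all_finite hP.finite_latticePoints).2 hnear] with y hy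
  exact hP.mem_polarDual_iff.2 hy

lemma IsLatticePolytope.exists_dotProduct_neg (hP : IsLatticePolytope P) (hzero : 0 ∈ interior P)
    {c : Fin d → ℤ} (hc : c ≠ 0) :
    ∃ v ∈ latticePoints P, c ⬝ᵥ v < 0 := by
  by_contra! hnonneg
  have hlim : Tendsto (fun t : ℝ => t • coeLat c) (nhdsWithin 0 (Set.Iio 0)) (nhds 0) :=
    tendsto_nhdsWithin_of_tendsto_nhds
      (Continuous.tendsto' (by fun_prop) _ _ (zero_smul ℝ (coeLat c)))
  have hmem : ∀ᶠ t : ℝ in nhdsWithin 0 (Set.Iio 0), t • coeLat c ∈ P :=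
    hlim.eventually_mem (mem_interior_iff_mem_nhds.1 hzero)
  obtain ⟨t, htP, ht⟩ := (hmem.and self_mem_nhdsWithin).exists
  have hhalf : P ⊆ {x | 0 ≤ coeLat c ⬝ᵥ x} := by
    conv_lhs => rw [← hP.convexHull_latticePoints]
    refine convexHull_min ?_
      (convex_halfSpace_ge (dotProductBilin ℝ ℝ (coeLat c)).isLinear 0)
    rintro _ ⟨v, hv, rfl⟩
    rw [Set.mem_ofPred_eq, coeLat_dotProduct_coeLat]
    exact_mod_cast hnonneg v hv
  have hpos : 0 < c ⬝ᵥ c := lt_of_le_of_ne (Finset.sum_nonneg fun i _ => mul_self_nonneg (c i))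
    fun h => hc (dotProduct_self_eq_zero.1 h.symm)
  have hle : 0 ≤ coeLat c ⬝ᵥ (t • coeLat c) := hhalf htP
  rw [dotProduct_smul, coeLat_dotProduct_coeLat, smul_eq_mul] at hle
  exact (mul_neg_of_neg_of_pos ht (Int.cast_pos.2 hpos)).not_ge hle

end Duality

namespace IsReflexive

variable {d : ℕ} {P : Set (Fin d → ℝ)} (hP : IsReflexive P)
include hP

lemma polarDual_polarDual : polarDual (polarDual P) = P :=
  _root_.polarDual_polarDual hP.1.convex hP.1.isCompact.isClosed (interior_subset hP.2.1)

protected lemma polarDual : IsReflexive (polarDual P) :=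
  ⟨hP.2.2, hP.1.zero_mem_interior_polarDual, hP.polarDual_polarDual.symm ▸ hP.1⟩

lemma mem_iff {x : Fin d → ℝ} :
    x ∈ P ↔ ∀ u ∈ latticePoints (polarDual P), -1 ≤ coeLat u ⬝ᵥ x := by
  conv_lhs => rw [← hP.polarDual_polarDual]
  exact hP.2.2.mem_polarDual_iff

lemma mem_latticePoints_iff {v : Fin d → ℤ} :
    v ∈ latticePoints P ↔ ∀ u ∈ latticePoints (polarDual P), -1 ≤ u ⬝ᵥ v := by
  refine hP.mem_iff.trans (forall₂_congr fun u _ => ?_)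
  rw [coeLat_dotProduct_coeLat]
  norm_cast

lemma exists_dotProduct_neg {c : Fin d → ℤ} (hc : c ≠ 0) :
    ∃ v ∈ latticePoints P, c ⬝ᵥ v < 0 :=
  hP.1.exists_dotProduct_neg hP.2.1 hc

lemma exists_dotProduct_eq_neg_one {v : Fin d → ℤ} (hv : v ∈ latticePoints P) (hv0 : v ≠ 0) :
    ∃ u ∈ latticePoints (polarDual P), u ⬝ᵥ v = -1 := by
  obtain ⟨u, hu, huv⟩ := hP.polarDual.exists_dotProduct_neg hv0
  rw [dotProduct_comm] at huv
  have := hP.mem_latticePoints_iff.1 hv u hu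
  exact ⟨u, hu, by lia⟩

lemma neg_one_le_of_smul_add_smul_mem {v w : Fin d → ℤ} {x y : ℤ}
    (hmem : x • v + y • w ∈ latticePoints P) {u : Fin d → ℤ}
    (hu : u ∈ latticePoints (polarDual P)) : -1 ≤ x * (u ⬝ᵥ v) + y * (u ⬝ᵥ w) := by
  simpa only [dotProduct_add, dotProduct_smul, smul_eq_mul]
    using hP.mem_latticePoints_iff.1 hmem u hu

end IsReflexive

section LatticeMap

open scoped Matrix

variable {d : ℕ}

/-- The linear endomorphism of `ℝ^d` given by an integer matrix; the unimodular changes of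
coordinates are the `latticeMap B` with `B` invertible over `ℤ`. -/
def latticeMap (B : Matrix (Fin d) (Fin d) ℤ) : (Fin d → ℝ) →ₗ[ℝ] (Fin d → ℝ) :=
  Matrix.toLin' (B.map (↑))

variable {A B : Matrix (Fin d) (Fin d) ℤ} {P : Set (Fin d → ℝ)}

lemma latticeMap_coeLat (B : Matrix (Fin d) (Fin d) ℤ) (v : Fin d → ℤ) :
    latticeMap B (coeLat v) = coeLat (B *ᵥ v) :=
  funext fun i => ((Int.castRingHom ℝ).map_mulVec B v i).symm

lemma dotProduct_latticeMap (B : Matrix (Fin d) (Fin d) ℤ) (x y : Fin d → ℝ) :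
    y ⬝ᵥ latticeMap B x = latticeMap Bᵀ y ⬝ᵥ x := by
  simp only [latticeMap, Matrix.toLin'_apply, Matrix.dotProduct_mulVec, Matrix.transpose_map,
    Matrix.mulVec_transpose]

lemma latticeMap_latticeMap (hAB : A * B = 1) (x : Fin d → ℝ) :
    latticeMap A (latticeMap B x) = x := by
  have : A.map ((↑) : ℤ → ℝ) * B.map (↑) = 1 := by
    rw [← Matrix.map_mul_intCast, hAB]
    simp
  simp [latticeMap, this]

lemma image_latticeMap (hAB : A * B = 1) (P : Set (Fin d → ℝ)) :
    latticeMap B '' P = latticeMap A ⁻¹' P :=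
  congr_fun (Set.image_eq_preimage_of_inverse (latticeMap_latticeMap hAB)
    (latticeMap_latticeMap (mul_eq_one_comm.1 hAB))) P

lemma IsLatticePolytope.image_latticeMap (hP : IsLatticePolytope P)
    (B : Matrix (Fin d) (Fin d) ℤ) : IsLatticePolytope (latticeMap B '' P) := by
  classical
  obtain ⟨V, rfl⟩ := hP
  refine ⟨V.image (B *ᵥ ·), ?_⟩
  rw [LinearMap.image_convexHull, Finset.coe_image, Set.image_image, Set.image_image]
  simp only [latticeMap_coeLat]

lemma polarDual_image_latticeMap (B : Matrix (Fin d) (Fin d) ℤ) (P : Set (Fin d → ℝ)) :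
    polarDual (latticeMap B '' P) = latticeMap Bᵀ ⁻¹' polarDual P := by
  ext y
  simp only [mem_polarDual_iff, Set.forall_mem_image, Set.mem_preimage, dotProduct_latticeMap]

lemma polarDual_image_latticeMap_of_mul_eq_one (hAB : A * B = 1) (P : Set (Fin d → ℝ)) :
    polarDual (latticeMap B '' P) = latticeMap Aᵀ '' polarDual P := by
  have hBA : Bᵀ * Aᵀ = 1 := by rw [← Matrix.transpose_mul, hAB, Matrix.transpose_one]
  rw [polarDual_image_latticeMap, image_latticeMap hBA]

lemma IsReflexive.image_latticeMap (hP : IsReflexive P) (hAB : A * B = 1) :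
    IsReflexive (latticeMap B '' P) := by
  refine ⟨hP.1.image_latticeMap B, ?_, ?_⟩
  · rw [_root_.image_latticeMap hAB]
    exact preimage_interior_subset_interior_preimage
      (LinearMap.continuous_of_finiteDimensional _) (by simpa using hP.2.1)
  · rw [polarDual_image_latticeMap_of_mul_eq_one hAB]
    exact hP.2.2.image_latticeMap Aᵀ

lemma volume_image_latticeMap (hAB : A * B = 1) (P : Set (Fin d → ℝ)) :
    volume (latticeMap B '' P) = volume P := by
  have hdet : LinearMap.det (latticeMap B) = (B.det : ℝ) := by
    rw [latticeMap, LinearMap.det_toLin', Int.cast_det]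
  have hunit : |(B.det : ℝ)| = 1 := by
    exact_mod_cast Int.isUnit_iff_abs_eq.1 (Matrix.isUnit_det_of_left_inverse hAB)
  rw [Measure.addHaar_image_linearMap, hdet, hunit, ENNReal.ofReal_one, one_mul]

end LatticeMap

/-- The polytope `P` contains a pair of opposite nonzero lattice points. -/
def HasAntipodalPair {d : ℕ} (P : Set (Fin d → ℝ)) : Prop :=
  ∃ v ∈ latticePoints P, v ≠ 0 ∧ -v ∈ latticePoints P

namespace IsReflexive

variable {d : ℕ} {P : Set (Fin d → ℝ)} (hP : IsReflexive P)
include hP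

lemma exists_one_lt_dotProduct (hpair : ¬HasAntipodalPair P) {v : Fin d → ℤ} (hv0 : v ≠ 0)
    (hv : v ∈ latticePoints P) : ∃ u ∈ latticePoints (polarDual P), 1 < u ⬝ᵥ v := by
  by_contra! hle
  refine hpair ⟨v, hv, hv0, hP.mem_latticePoints_iff.2 fun u hu => ?_⟩
  rw [dotProduct_neg, neg_le_neg_iff]
  exact hle u hu

lemma hasAntipodalPair_polarDual_of_abs_dotProduct_le_one {c : Fin d → ℤ} (hc : c ≠ 0)
    (habs : ∀ z ∈ latticePoints P, |c ⬝ᵥ z| ≤ 1) : HasAntipodalPair (polarDual P) := by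
  refine ⟨c, ?_, hc, ?_⟩ <;> rw [hP.polarDual.mem_latticePoints_iff, hP.polarDual_polarDual] <;>
    intro z hz
  · rw [dotProduct_comm]
    exact (abs_le.1 (habs z hz)).1
  · rw [dotProduct_neg, neg_le_neg_iff, dotProduct_comm]
    exact (abs_le.1 (habs z hz)).2

end IsReflexive

section LatticePlane

/-- The determinant of two vectors of `ℤ²`. It is a unit if and only if they form a basis of the
lattice. -/
def latticeDet (v w : Fin 2 → ℤ) : ℤ := v 0 * w 1 - v 1 * w 0

variable {P : Set (Fin 2 → ℝ)} {v w t : Fin 2 → ℤ}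

lemma latticeDet_swap (v w : Fin 2 → ℤ) : latticeDet v w = -latticeDet w v := by
  simp only [latticeDet]
  ring

@[simp]
lemma latticeDet_self (v : Fin 2 → ℤ) : latticeDet v v = 0 :=
  sub_eq_zero.2 (mul_comm _ _)

@[simp]
lemma latticeDet_add_left (v v' w : Fin 2 → ℤ) :
    latticeDet (v + v') w = latticeDet v w + latticeDet v' w := by
  simp only [latticeDet, Pi.add_apply]
  ring

@[simp]
lemma latticeDet_neg_left (v w : Fin 2 → ℤ) : latticeDet (-v) w = -latticeDet v w := by
  simp only [latticeDet, Pi.neg_apply]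
  ring

@[simp]
lemma latticeDet_sub_left (v v' w : Fin 2 → ℤ) :
    latticeDet (v - v') w = latticeDet v w - latticeDet v' w := by
  rw [sub_eq_add_neg, latticeDet_add_left, latticeDet_neg_left, sub_eq_add_neg]

@[simp]
lemma latticeDet_neg_right (v w : Fin 2 → ℤ) : latticeDet v (-w) = -latticeDet v w := by
  rw [latticeDet_swap, latticeDet_neg_left, ← latticeDet_swap]

@[simp]
lemma latticeDet_sub_right (v w w' : Fin 2 → ℤ) :
    latticeDet v (w - w') = latticeDet v w - latticeDet v w' := by
  rw [latticeDet_swap, latticeDet_sub_left, latticeDet_swap w, latticeDet_swap w', neg_sub,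
    neg_sub_neg]

lemma left_ne_zero_of_isUnit_latticeDet (h : IsUnit (latticeDet v w)) : v ≠ 0 := by
  rintro rfl
  simp [latticeDet] at h

lemma exists_eq_smul_add_smul (h : IsUnit (latticeDet v w)) (z : Fin 2 → ℤ) :
    ∃ x y : ℤ, z = x • v + y • w := by
  have hsq : latticeDet v w * latticeDet v w = 1 := Int.isUnit_mul_self h
  refine ⟨latticeDet v w * latticeDet z w, latticeDet v w * latticeDet v z, ?_⟩
  ext i
  fin_cases i <;> simp only [latticeDet, Pi.add_apply, Pi.smul_apply, smul_eq_mul, Fin.zero_eta,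
    Fin.mk_one] at hsq ⊢
  · linear_combination -(z 0) * hsq
  · linear_combination -(z 1) * hsq

lemma exists_dotProduct_eq_zero_and_eq_one (h : IsUnit (latticeDet v w)) :
    ∃ c : Fin 2 → ℤ, c ⬝ᵥ v = 0 ∧ c ⬝ᵥ w = 1 := by
  have hsq : latticeDet v w * latticeDet v w = 1 := Int.isUnit_mul_self h
  refine ⟨latticeDet v w • ![-v 1, v 0], ?_, ?_⟩ <;> rw [smul_dotProduct, smul_eq_mul] <;>
    simp only [latticeDet, dotProduct, Fin.sum_univ_two, Matrix.cons_val_zero, Matrix.cons_val_one]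
      at hsq ⊢
  · ring
  · linear_combination hsq

lemma hasAntipodalPair_of_isUnit_latticeDet (h : IsUnit (latticeDet v w)) (hv : v ∈ latticePoints P)
    (hneg : -v ∈ latticePoints P) : HasAntipodalPair P :=
  ⟨v, hv, left_ne_zero_of_isUnit_latticeDet h, hneg⟩

namespace IsReflexive

variable (hP : IsReflexive P)
include hP

lemma exists_add_smul_mem (h : IsUnit (latticeDet v w)) (hv : v ∈ latticePoints P) :
    ∃ k : ℤ, w + k • v ∈ latticePoints P := by
  obtain ⟨c, hcv, hcw⟩ := exists_dotProduct_eq_zero_and_eq_one h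
  obtain ⟨z, hz, hcz⟩ := hP.exists_dotProduct_neg (c := -c) fun h0 => by
    simp [neg_eq_zero.1 h0] at hcw
  obtain ⟨x, y, rfl⟩ := exists_eq_smul_add_smul h z
  have hy : 0 < y := by
    rw [neg_dotProduct, dotProduct_add, dotProduct_smul, dotProduct_smul, hcv, hcw] at hcz
    simpa using hcz
  -- Rounding `x / y` up: `w + k • v = (z + r • v) / y` with `z = x • v + y • w` and `0 ≤ r < y`.
  refine ⟨-(-x / y), hP.mem_latticePoints_iff.2 fun u hu => ?_⟩
  have hp : -1 ≤ u ⬝ᵥ v := hP.mem_latticePoints_iff.1 hv u hu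
  have hq := hP.neg_one_le_of_smul_add_smul_mem hz hu
  have hr : 0 ≤ -x % y := Int.emod_nonneg _ hy.ne'
  have hry : -x % y < y := Int.emod_lt_of_pos _ hy
  have hdiv : y * (-x / y) + -x % y = -x := Int.mul_ediv_add_emod (-x) y
  rw [dotProduct_add, dotProduct_smul, smul_eq_mul]
  refine le_of_mul_le_mul_left ?_ hy
  calc y * -1 ≤ (-x % y) * -1 + -1 := by lia
    _ ≤ (-x % y) * (u ⬝ᵥ v) + (x * (u ⬝ᵥ v) + y * (u ⬝ᵥ w)) := by gcongr
    _ = y * (u ⬝ᵥ w + -(-x / y) * (u ⬝ᵥ v)) := by linear_combination (u ⬝ᵥ v) * hdiv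

lemma hasAntipodalPair_of_mem_of_collinear (h : IsUnit (latticeDet v t)) (hv : v ∈ latticePoints P)
    (ht : t ∈ latticePoints P) (hadd : v + t ∈ latticePoints P) (hsub : v - t ∈ latticePoints P) :
    HasAntipodalPair P := by
  have htv : IsUnit (latticeDet t (-v)) := by rwa [latticeDet_neg_right, ← latticeDet_swap]
  obtain ⟨k, hk⟩ := hP.exists_add_smul_mem htv ht
  have hle (u) (hu : u ∈ latticePoints (polarDual P)) :
      -1 ≤ u ⬝ᵥ v + u ⬝ᵥ t ∧ -1 ≤ u ⬝ᵥ v - u ⬝ᵥ t ∧ -1 ≤ -(u ⬝ᵥ v) + k * (u ⬝ᵥ t) := by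
    rw [← dotProduct_add, ← dotProduct_sub, ← smul_eq_mul k, ← dotProduct_smul, ← dotProduct_neg,
      ← dotProduct_add]
    exact ⟨hP.mem_latticePoints_iff.1 hadd u hu, hP.mem_latticePoints_iff.1 hsub u hu,
      hP.mem_latticePoints_iff.1 hk u hu⟩
  rcases (by lia : 2 ≤ k ∨ k = 1 ∨ k = 0 ∨ k = -1 ∨ k ≤ -2) with hk2 | rfl | rfl | rfl | hk2
  · obtain ⟨u, hu, hut⟩ :=
      hP.exists_dotProduct_eq_neg_one ht (left_ne_zero_of_isUnit_latticeDet htv)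
    obtain ⟨h₁, -, h₃⟩ := hle u hu
    rw [hut] at h₁ h₃
    lia
  · exact hasAntipodalPair_of_isUnit_latticeDet (w := t) (by simpa) hsub
      (by convert hk using 1; module)
  · exact hasAntipodalPair_of_isUnit_latticeDet h hv (by simpa using hk)
  · exact hasAntipodalPair_of_isUnit_latticeDet (w := t) (by simpa) hadd
      (by convert hk using 1; module)
  · refine hasAntipodalPair_of_isUnit_latticeDet htv ht (hP.mem_latticePoints_iff.2 fun u hu => ?_)
    obtain ⟨-, h₂, h₃⟩ := hle u hu
    rw [dotProduct_neg]
    nlinarith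

lemma hasAntipodalPair_of_collinear (h : IsUnit (latticeDet v t)) (hv : v ∈ latticePoints P)
    (hadd : v + t ∈ latticePoints P) (hsub : v - t ∈ latticePoints P) : HasAntipodalPair P := by
  have hle (u) (hu : u ∈ latticePoints (polarDual P)) :
      -1 ≤ u ⬝ᵥ v + u ⬝ᵥ t ∧ -1 ≤ u ⬝ᵥ v - u ⬝ᵥ t := by
    rw [← dotProduct_add, ← dotProduct_sub]
    exact ⟨hP.mem_latticePoints_iff.1 hadd u hu, hP.mem_latticePoints_iff.1 hsub u hu⟩
  obtain ⟨u₀, hu₀, hu₀v⟩ :=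
    hP.exists_dotProduct_eq_neg_one hv (left_ne_zero_of_isUnit_latticeDet h)
  obtain ⟨h₁, h₂⟩ := hle u₀ hu₀
  have hu₀t : u₀ ⬝ᵥ t = 0 := by lia
  obtain ⟨z, hz, hu₀z⟩ := hP.exists_dotProduct_neg (c := -u₀) fun h0 => by
    simp [neg_eq_zero.1 h0] at hu₀v
  obtain ⟨x, y, rfl⟩ := exists_eq_smul_add_smul h z
  have hx : x < 0 := by
    rw [neg_dotProduct, dotProduct_add, dotProduct_smul, dotProduct_smul, hu₀v, hu₀t] at hu₀z
    simpa using hu₀z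
  rcases lt_trichotomy y 0 with hy | rfl | hy
  · have hneg : -t ∈ latticePoints P := hP.mem_latticePoints_iff.2 fun u hu => by
      have := hP.neg_one_le_of_smul_add_smul_mem hz hu
      have := hle u hu
      rw [dotProduct_neg]
      by_contra!
      nlinarith
    exact hP.hasAntipodalPair_of_mem_of_collinear (t := -t) (by simpa) hv hneg
      (by rwa [← sub_eq_add_neg]) (by rwa [sub_neg_eq_add])
  · refine hasAntipodalPair_of_isUnit_latticeDet h hv (hP.mem_latticePoints_iff.2 fun u hu => ?_)
    have := hP.neg_one_le_of_smul_add_smul_mem hz hu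
    rw [dotProduct_neg]
    by_contra!
    nlinarith
  · have hmem : t ∈ latticePoints P := hP.mem_latticePoints_iff.2 fun u hu => by
      have := hP.neg_one_le_of_smul_add_smul_mem hz hu
      have := hle u hu
      by_contra!
      nlinarith
    exact hP.hasAntipodalPair_of_mem_of_collinear h hv hmem hadd hsub

lemma hasAntipodalPair_or_polarDual_of_triangle (h : IsUnit (latticeDet v w))
    (hv : v ∈ latticePoints P) (hw : w ∈ latticePoints P) (hneg : -(v + w) ∈ latticePoints P) :
    HasAntipodalPair P ∨ HasAntipodalPair (polarDual P) := by
  refine or_iff_not_imp_left.2 fun hpair => ?_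
  have hle (u) (hu : u ∈ latticePoints (polarDual P)) :
      -1 ≤ u ⬝ᵥ v ∧ -1 ≤ u ⬝ᵥ w ∧ -1 ≤ -(u ⬝ᵥ v + u ⬝ᵥ w) := by
    rw [← dotProduct_add, ← dotProduct_neg]
    exact ⟨hP.mem_latticePoints_iff.1 hv u hu, hP.mem_latticePoints_iff.1 hw u hu,
      hP.mem_latticePoints_iff.1 hneg u hu⟩
  -- In the basis dual to `v, w`, the points below are `(2, -1)`, `(-1, 2)` and `(-1, -1)`.
  have hwv : IsUnit (latticeDet w v) := by rw [latticeDet_swap]; exact h.neg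
  have hvwv : IsUnit (latticeDet (-(v + w)) v) := by simpa
  obtain ⟨a, ha, hav⟩ :=
    hP.exists_one_lt_dotProduct hpair (left_ne_zero_of_isUnit_latticeDet h) hv
  obtain ⟨b, hb, hbw⟩ :=
    hP.exists_one_lt_dotProduct hpair (left_ne_zero_of_isUnit_latticeDet hwv) hw
  obtain ⟨e, he, hevw⟩ :=
    hP.exists_one_lt_dotProduct hpair (left_ne_zero_of_isUnit_latticeDet hvwv) hneg
  have hae := hle a ha
  have hbe := hle b hb
  have hee := hle e he
  rw [dotProduct_neg, dotProduct_add] at hevw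
  obtain ⟨c, hcv, hcw⟩ := exists_dotProduct_eq_zero_and_eq_one h
  have habs (z) (hz : z ∈ latticePoints P) : |c ⬝ᵥ z| ≤ 1 := by
    obtain ⟨x, y, rfl⟩ := exists_eq_smul_add_smul h z
    have hza := hP.neg_one_le_of_smul_add_smul_mem hz ha
    have hzb := hP.neg_one_le_of_smul_add_smul_mem hz hb
    have hze := hP.neg_one_le_of_smul_add_smul_mem hz he
    rw [show a ⬝ᵥ v = 2 by lia, show a ⬝ᵥ w = -1 by lia] at hza
    rw [show b ⬝ᵥ v = -1 by lia, show b ⬝ᵥ w = 2 by lia] at hzb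
    rw [show e ⬝ᵥ v = -1 by lia, show e ⬝ᵥ w = -1 by lia] at hze
    rw [dotProduct_add, dotProduct_smul, dotProduct_smul, hcv, hcw, smul_eq_mul, smul_eq_mul,
      abs_le]
    lia
  exact hP.hasAntipodalPair_polarDual_of_abs_dotProduct_le_one (fun h0 => by simp [h0] at hcw) habs

lemma hasAntipodalPair_or_sub_mem_or_neg_add_mem (h : IsUnit (latticeDet v w))
    (hv : v ∈ latticePoints P) (hw : w ∈ latticePoints P) (hadd : v + w ∉ latticePoints P) :
    HasAntipodalPair P ∨ w - v ∈ latticePoints P ∨ -(v + w) ∈ latticePoints P := by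
  have hwv : IsUnit (latticeDet w (-v)) := by rwa [latticeDet_neg_right, ← latticeDet_swap]
  have hle (u) (hu : u ∈ latticePoints (polarDual P)) : -1 ≤ u ⬝ᵥ v ∧ -1 ≤ u ⬝ᵥ w :=
    ⟨hP.mem_latticePoints_iff.1 hv u hu, hP.mem_latticePoints_iff.1 hw u hu⟩
  obtain ⟨k, hk⟩ := hP.exists_add_smul_mem hwv hw
  have hlek (u) (hu : u ∈ latticePoints (polarDual P)) : -1 ≤ -(u ⬝ᵥ v) + k * (u ⬝ᵥ w) := by
    simpa only [dotProduct_add, dotProduct_neg, dotProduct_smul, smul_eq_mul]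
      using hP.mem_latticePoints_iff.1 hk u hu
  have hk2 : k ≤ 2 := by
    simp only [hP.mem_latticePoints_iff, not_forall, not_le, dotProduct_add, exists_prop] at hadd
    obtain ⟨u, hu, huvw⟩ := hadd
    have huk := hlek u hu
    obtain ⟨huv, huw⟩ := hle u hu
    rw [show u ⬝ᵥ v = -1 by lia, show u ⬝ᵥ w = -1 by lia] at huk
    lia
  rcases (by lia : k = 2 ∨ k = 1 ∨ k = 0 ∨ k = -1 ∨ k ≤ -2) with rfl | rfl | rfl | rfl | hk2
  · refine .inl (hP.hasAntipodalPair_of_collinear (t := w - v) ?_ hw ?_ (by simpa))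
    · rwa [latticeDet_sub_right, latticeDet_self, zero_sub, ← latticeDet_swap]
    · convert hk using 1; module
  · exact .inr (.inl (by convert hk using 1; module))
  · exact .inl (hasAntipodalPair_of_isUnit_latticeDet h hv (by simpa using hk))
  · exact .inr (.inr (by convert hk using 1; module))
  · refine .inl
      (hasAntipodalPair_of_isUnit_latticeDet hwv hw (hP.mem_latticePoints_iff.2 fun u hu => ?_))
    have := hlek u hu
    have := hle u hu
    rw [dotProduct_neg]
    by_contra!
    nlinarith

lemma exists_isUnit_latticeDet :
    ∃ v ∈ latticePoints P, ∃ w ∈ latticePoints P,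
      IsUnit (latticeDet v w) ∧ v + w ∉ latticePoints P := by
  obtain ⟨v, hv, hcv⟩ := hP.exists_dotProduct_neg (c := ![1, 0]) (by simp)
  obtain ⟨u, -, huv⟩ := hP.exists_dotProduct_eq_neg_one hv fun h0 => by simp [h0] at hcv
  have hcross : latticeDet v ![u 1, -u 0] = 1 := by
    simp only [dotProduct, Fin.sum_univ_two] at huv
    simp [latticeDet]
    linarith
  obtain ⟨k, hk⟩ := hP.exists_add_smul_mem (hcross ▸ isUnit_one) hv
  obtain ⟨w, ⟨hw, hvw⟩, hmin⟩ := Set.exists_min_image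
    {w ∈ latticePoints P | latticeDet v w = 1} (u ⬝ᵥ ·)
    (hP.1.finite_latticePoints.subset fun _ => And.left)
    ⟨_, hk, by rw [← hcross]; simp [latticeDet]; ring⟩
  refine ⟨v, hv, w, hw, hvw ▸ isUnit_one, fun hadd => ?_⟩
  have := hmin (v + w) ⟨hadd, by rw [← hvw]; simp [latticeDet]; ring⟩
  rw [dotProduct_add, huv] at this
  lia

theorem hasAntipodalPair_or_polarDual :
    HasAntipodalPair P ∨ HasAntipodalPair (polarDual P) := by
  obtain ⟨v, hv, w, hw, h, hadd⟩ := hP.exists_isUnit_latticeDet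
  have hwv : IsUnit (latticeDet w v) := by rw [latticeDet_swap]; exact h.neg
  rcases hP.hasAntipodalPair_or_sub_mem_or_neg_add_mem h hv hw hadd with hpair | hsub | hneg
  · exact .inl hpair
  · rcases hP.hasAntipodalPair_or_sub_mem_or_neg_add_mem hwv hw hv (by rwa [add_comm]) with
      hpair | hsub' | hneg
    · exact .inl hpair
    · exact .inl (hasAntipodalPair_of_isUnit_latticeDet (w := v) (by simpa) hsub (by simpa))
    · exact hP.hasAntipodalPair_or_polarDual_of_triangle h hv hw (by rwa [add_comm])
  · exact hP.hasAntipodalPair_or_polarDual_of_triangle h hv hw hneg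

end IsReflexive
end LatticePlane

section LatticeMapArea

variable {A B : Matrix (Fin 2) (Fin 2) ℤ}

lemma v2_image_latticeMap (hAB : A * B = 1) (P : Set (Fin 2 → ℝ)) :
    v2 (latticeMap B '' P) = v2 P := by
  rw [v2, v2, volume_image_latticeMap hAB]

lemma v2_polarDual_image_latticeMap (hAB : A * B = 1) (P : Set (Fin 2 → ℝ)) :
    v2 (polarDual (latticeMap B '' P)) = v2 (polarDual P) := by
  have hBA : B.transpose * A.transpose = 1 := by
    rw [← Matrix.transpose_mul, hAB, Matrix.transpose_one]
  rw [polarDual_image_latticeMap_of_mul_eq_one hAB, v2_image_latticeMap hBA]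

end LatticeMapArea

section PlaneRegion

variable {f g : ℝ → ℝ} {a b : ℝ}

lemma v2_region (hf : Continuous f) (hg : Continuous g) (hab : a ≤ b)
    (hfg : ∀ t ∈ Set.Icc a b, f t ≤ g t) :
    v2 {z | z 0 ∈ Set.Icc a b ∧ z 1 ∈ Set.Icc (f (z 0)) (g (z 0))} =
      2 * ∫ t in a..b, (g t - f t) := by
  set S : Set (ℝ × ℝ) := {p | p.1 ∈ Set.Icc a b ∧ p.2 ∈ Set.Icc (f p.1) (g p.1)}
  have hS : IsClosed S := by
    have hbelow : IsClosed {p : ℝ × ℝ | f p.1 ≤ p.2} := isClosed_le (by fun_prop) (by fun_prop)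
    have habove : IsClosed {p : ℝ × ℝ | p.2 ≤ g p.1} := isClosed_le (by fun_prop) (by fun_prop)
    exact (isClosed_Icc.preimage continuous_fst).inter (hbelow.inter habove)
  have hslice (t : ℝ) : volume (Prod.mk t ⁻¹' S) =
      (Set.Icc a b).indicator (fun t => ENNReal.ofReal (g t - f t)) t := by
    by_cases ht : t ∈ Set.Icc a b
    · have : Prod.mk t ⁻¹' S = Set.Icc (f t) (g t) := Set.ext fun s => and_iff_right ht
      rw [this, Real.volume_Icc, Set.indicator_of_mem ht]
    · have : Prod.mk t ⁻¹' S = ∅ := Set.ext fun s => iff_of_false (fun hs => ht hs.1) id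
      rw [this, measure_empty, Set.indicator_of_notMem ht]
  have hvol : volume {z : Fin 2 → ℝ | z 0 ∈ Set.Icc a b ∧ z 1 ∈ Set.Icc (f (z 0)) (g (z 0))} =
      ∫⁻ t in Set.Icc a b, ENNReal.ofReal (g t - f t) := by
    rw [← lintegral_indicator measurableSet_Icc, ← lintegral_congr hslice,
      ← Measure.prod_apply hS.measurableSet, ← Measure.volume_eq_prod,
      ← (volume_preserving_finTwoArrow ℝ).measure_preimage hS.nullMeasurableSet]
    rfl
  rw [v2, hvol, intervalIntegral.integral_of_le hab, ← integral_Icc_eq_integral_Ioc,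
    integral_eq_lintegral_of_nonneg_ae]
  · exact (ae_restrict_iff' measurableSet_Icc).2 (.of_forall fun t ht => sub_nonneg.2 (hfg t ht))
  · exact (hg.sub hf).aestronglyMeasurable

lemma v2_region_swap (hf : Continuous f) (hg : Continuous g) (hab : a ≤ b)
    (hfg : ∀ t ∈ Set.Icc a b, f t ≤ g t) :
    v2 {z | z 1 ∈ Set.Icc a b ∧ z 0 ∈ Set.Icc (f (z 1)) (g (z 1))} =
      2 * ∫ t in a..b, (g t - f t) := by
  have hswap : (!![0, 1; 1, 0] : Matrix (Fin 2) (Fin 2) ℤ) * !![0, 1; 1, 0] = 1 := by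
    decide
  rw [← v2_region hf hg hab hfg, ← v2_image_latticeMap hswap, image_latticeMap hswap]
  congr 1
  ext z
  simp [latticeMap]

lemma integral_affine_add_max (c p q : ℝ) (ha : 0 ≤ a) (hb : 0 ≤ b) :
    ∫ t in -a..b, (c + p * max t 0 + q * max (-t) 0) =
      c * (a + b) + p * (b ^ 2 / 2) + q * (a ^ 2 / 2) := by
  have hcont : Continuous fun t : ℝ => c + p * max t 0 + q * max (-t) 0 := by fun_prop
  have hleft : ∫ t in -a..0, (c + p * max t 0 + q * max (-t) 0) = ∫ t in -a..0, (c - q * t) := by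
    refine intervalIntegral.integral_congr fun t ht => ?_
    rw [Set.uIcc_of_le (neg_nonpos.2 ha)] at ht
    simp only [max_eq_right ht.2, max_eq_left (neg_nonneg.2 ht.2)]
    ring
  have hright : ∫ t in 0..b, (c + p * max t 0 + q * max (-t) 0) = ∫ t in 0..b, (c + p * t) := by
    refine intervalIntegral.integral_congr fun t ht => ?_
    rw [Set.uIcc_of_le hb] at ht
    simp only [max_eq_left ht.1, max_eq_right (neg_nonpos.2 ht.1)]
    ring
  rw [← intervalIntegral.integral_add_adjacent_intervals (hcont.intervalIntegrable _ 0)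
    (hcont.intervalIntegrable _ _), hleft, hright,
    intervalIntegral.integral_sub (by simp) (Continuous.intervalIntegrable (by fun_prop) _ _),
    intervalIntegral.integral_add (by simp) (Continuous.intervalIntegrable (by fun_prop) _ _),
    intervalIntegral.integral_const_mul, intervalIntegral.integral_const_mul, integral_id,
    integral_id, intervalIntegral.integral_const, intervalIntegral.integral_const, smul_eq_mul,
    smul_eq_mul]
  ring

end PlaneRegion

section Trapezoid

/-- The trapezoid in the strip `0 ≤ y ≤ h` that has `[-1, 1] × {0}` as its lower side and is bounded
by the lines `x = 1 + l * y` and `x = -1 - m * y`. -/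
def trapezoid (l m h : ℝ) : Set (Fin 2 → ℝ) :=
  {z | z 1 ∈ Set.Icc 0 h ∧ z 0 ∈ Set.Icc (-1 - m * z 1) (1 + l * z 1)}

/-- For `0 < h` and `-2 ≤ (l + m) * h`, the polar dual of `trapezoid l m h` is the part of the strip
`-1 ≤ x ≤ 1` above the graph of this piecewise linear function, which has the values `l`, `-1 / h`
and `m` at `-1`, `0` and `1`. -/
def dualFloor (l m h t : ℝ) : ℝ :=
  -h⁻¹ + (h⁻¹ + m) * max t 0 + (h⁻¹ + l) * max (-t) 0

/-- The matrix of the reflection `(x, y) ↦ (x, -y)`, which exchanges the two halves of a polygon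
that are separated by the first coordinate axis. -/
def reflection : Matrix (Fin 2) (Fin 2) ℤ := !![1, 0; 0, -1]

variable {P S : Set (Fin 2 → ℝ)} {l m h l' m' h' : ℝ}

lemma reflection_mul_reflection : reflection * reflection = 1 := by
  decide

lemma mem_image_reflection {z : Fin 2 → ℝ} :
    z ∈ latticeMap reflection '' S ↔ ![z 0, -z 1] ∈ S := by
  rw [image_latticeMap reflection_mul_reflection, Set.mem_preimage]
  congr! 1
  ext i
  fin_cases i <;> simp [latticeMap, reflection]

lemma polarDual_image_reflection (S : Set (Fin 2 → ℝ)) :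
    polarDual (latticeMap reflection '' S) = latticeMap reflection '' polarDual S := by
  rw [polarDual_image_latticeMap_of_mul_eq_one reflection_mul_reflection]
  congr 2
  ext i j
  fin_cases i <;> fin_cases j <;> rfl

lemma mem_latticePoints_image_reflection {a b : ℤ} :
    ![a, b] ∈ latticePoints (latticeMap reflection '' S) ↔ ![a, -b] ∈ latticePoints S := by
  change coeLat ![a, b] ∈ latticeMap reflection '' S ↔ coeLat ![a, -b] ∈ S
  rw [mem_image_reflection]
  congr! 1
  ext i
  fin_cases i <;> simp [coeLat]

lemma polarDual_trapezoid (hh : 0 < h) (hlm : -2 ≤ (l + m) * h) :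
    polarDual (trapezoid l m h) = {y | y 0 ∈ Set.Icc (-1) 1 ∧ dualFloor l m h (y 0) ≤ y 1} := by
  have hhh : h * h⁻¹ = 1 := mul_inv_cancel₀ hh.ne'
  ext y
  simp only [polarDual, Fin.sum_univ_two, Set.mem_ofPred_eq, Set.mem_Icc, dualFloor]
  constructor
  · intro hy
    have hvertex (x t : ℝ) (ht : t ∈ Set.Icc 0 h) (hx : x ∈ Set.Icc (-1 - m * t) (1 + l * t)) :
        -1 ≤ y 0 * x + y 1 * t := hy ![x, t] ⟨ht, hx⟩
    have h₁ := hvertex 1 0 ⟨le_rfl, hh.le⟩ (by norm_num)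
    have h₂ := hvertex (-1) 0 ⟨le_rfl, hh.le⟩ (by norm_num)
    have h₃ := hvertex (1 + l * h) h ⟨hh.le, le_rfl⟩ ⟨by linarith, le_rfl⟩
    have h₄ := hvertex (-1 - m * h) h ⟨hh.le, le_rfl⟩ ⟨le_rfl, by linarith⟩
    refine ⟨⟨by linarith, by linarith⟩, le_of_mul_le_mul_left ?_ hh⟩
    rcases le_total 0 (y 0) with hy0 | hy0
    · rw [max_eq_left hy0, max_eq_right (neg_nonpos.2 hy0)]
      linear_combination h₄ + (y 0 - 1) * hhh
    · rw [max_eq_right hy0, max_eq_left (neg_nonneg.2 hy0)]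
      linear_combination h₃ + (- y 0 - 1) * hhh
  · rintro ⟨⟨hy₁, hy₂⟩, hy⟩ z ⟨⟨hz₁, hz₂⟩, hz₃, hz₄⟩
    have hle : z 1 * h⁻¹ ≤ 1 := by rwa [← div_eq_mul_inv, div_le_one hh]
    have hy' := mul_le_mul_of_nonneg_right hy hz₁
    rcases le_total 0 (y 0) with hy0 | hy0
    · rw [max_eq_left hy0, max_eq_right (neg_nonpos.2 hy0)] at hy'
      nlinarith [mul_le_mul_of_nonneg_left hz₃ hy0,
        mul_le_mul_of_nonneg_left hle (sub_nonneg.2 hy₂)]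
    · rw [max_eq_right hy0, max_eq_left (neg_nonneg.2 hy0)] at hy'
      nlinarith [mul_le_mul_of_nonneg_left hz₄ (neg_nonneg.2 hy0),
        mul_le_mul_of_nonneg_left hle (neg_le_iff_add_nonneg'.1 hy₁)]

lemma eq_union_image_reflection (hT : P ∩ {z | 0 ≤ z 1} = S)
    {S' : Set (Fin 2 → ℝ)} (hT' : latticeMap reflection '' P ∩ {z | 0 ≤ z 1} = S') :
    P = S ∪ latticeMap reflection '' S' := by
  ext z
  have hz : ![z 0, - -z 1] = z := by ext i; fin_cases i <;> simp
  rw [← hT, ← hT', Set.mem_union, mem_image_reflection, Set.mem_inter_iff, Set.mem_inter_iff,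
    mem_image_reflection, Matrix.cons_val_zero, Matrix.cons_val_one, Matrix.cons_val_zero, hz,
    ← and_or_left]
  exact (and_iff_left ((le_total 0 (z 1)).imp_right neg_nonneg.2)).symm

lemma v2_trapezoid_union (hh : 0 < h) (hlm : -2 ≤ (l + m) * h) (hh' : 0 < h')
    (hlm' : -2 ≤ (l' + m') * h') :
    v2 (trapezoid l m h ∪ latticeMap reflection '' trapezoid l' m' h') =
      (4 * h + (l + m) * h ^ 2) + (4 * h' + (l' + m') * h' ^ 2) := by
  have hset : trapezoid l m h ∪ latticeMap reflection '' trapezoid l' m' h' =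
      {z | z 1 ∈ Set.Icc (-h') h ∧ z 0 ∈ Set.Icc (-1 - m * max (z 1) 0 - m' * max (-z 1) 0)
        (1 + l * max (z 1) 0 + l' * max (-z 1) 0)} := by
    ext z
    simp only [Set.mem_union, mem_image_reflection, trapezoid, Set.mem_ofPred_eq, Set.mem_Icc,
      Matrix.cons_val_zero, Matrix.cons_val_one]
    rcases lt_trichotomy (z 1) 0 with hz | hz | hz
    · rw [max_eq_right hz.le, max_eq_left (neg_nonneg.2 hz.le)]
      grind
    · simp [hz, hh.le, hh'.le]
    · rw [max_eq_left hz.le, max_eq_right (neg_nonpos.2 hz.le)]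
      grind
  rw [hset, v2_region_swap (f := fun t => -1 - m * max t 0 - m' * max (-t) 0)
    (g := fun t => 1 + l * max t 0 + l' * max (-t) 0) (by fun_prop) (by fun_prop) (by linarith)]
  · rw [intervalIntegral.integral_congr
      (g := fun t => 2 + (l + m) * max t 0 + (l' + m') * max (-t) 0) fun t _ => by ring,
      integral_affine_add_max _ _ _ hh'.le hh.le]
    ring
  · intro t ht
    rcases le_total 0 t with h0 | h0
    · rw [max_eq_left h0, max_eq_right (neg_nonpos.2 h0)]
      nlinarith [ht.2]
    · rw [max_eq_right h0, max_eq_left (neg_nonneg.2 h0)]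
      nlinarith [ht.1]

lemma v2_polarDual_trapezoid_union (hh : 0 < h) (hlm : -2 ≤ (l + m) * h) (hh' : 0 < h')
    (hlm' : -2 ≤ (l' + m') * h') (hl : l + l' ≤ 0) (hm : m + m' ≤ 0) :
    v2 (polarDual (trapezoid l m h ∪ latticeMap reflection '' trapezoid l' m' h')) =
      (2 * h⁻¹ - (l + m)) + (2 * h'⁻¹ - (l' + m')) := by
  have hset : polarDual (trapezoid l m h ∪ latticeMap reflection '' trapezoid l' m' h') =
      {y | y 0 ∈ Set.Icc (-1) 1 ∧
        y 1 ∈ Set.Icc (dualFloor l m h (y 0)) (-dualFloor l' m' h' (y 0))} := by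
    ext y
    rw [polarDual_union, polarDual_image_reflection, polarDual_trapezoid hh hlm,
      polarDual_trapezoid hh' hlm', Set.mem_inter_iff, mem_image_reflection]
    simp only [Set.mem_ofPred_eq, Matrix.cons_val_zero, Matrix.cons_val_one, Set.mem_Icc]
    rw [le_neg]
    tauto
  have hcont (l m h : ℝ) : Continuous (dualFloor l m h) := by unfold dualFloor; fun_prop
  rw [hset, v2_region (f := fun t => dualFloor l m h t) (g := fun t => -dualFloor l' m' h' t)
    (hcont _ _ _) (hcont _ _ _).neg (by norm_num)]
  · rw [intervalIntegral.integral_congr (g := fun t => (h⁻¹ + h'⁻¹) +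
      -(h⁻¹ + m + (h'⁻¹ + m')) * max t 0 + -(h⁻¹ + l + (h'⁻¹ + l')) * max (-t) 0)
      fun t _ => by simp only [dualFloor]; ring,
      integral_affine_add_max _ _ _ zero_le_one zero_le_one]
    ring
  · rintro t ⟨ht₁, ht₂⟩
    have hinv : 0 < h⁻¹ + h'⁻¹ := by positivity
    unfold dualFloor
    rcases le_total 0 t with h0 | h0
    · rw [max_eq_left h0, max_eq_right (neg_nonpos.2 h0)]
      nlinarith
    · rw [max_eq_right h0, max_eq_left (neg_nonneg.2 h0)]
      nlinarith

end Trapezoid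

section HalfArea

variable {l m h : ℤ}

lemma height_pos_and_neg_two_le_add_mul (hh : h = 1 ∧ -2 ≤ l + m ∨ h = 2 ∧ l + m = -1) :
    (0 : ℝ) < h ∧ (-2 : ℝ) ≤ (l + m) * h := by
  rcases hh with ⟨rfl, hlm⟩ | ⟨rfl, hlm⟩
  · exact ⟨by norm_num, by simpa using (by exact_mod_cast hlm : (-2 : ℝ) ≤ l + m)⟩
  · rw [(by exact_mod_cast hlm : (l + m : ℝ) = -1)]
    norm_num

lemma half_area_add_half_dual_area_eq_six (hh : h = 1 ∨ h = 2 ∧ l + m = -1) :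
    (4 * h + (l + m) * h ^ 2) + (2 * (h : ℝ)⁻¹ - (l + m)) = 6 := by
  rcases hh with rfl | ⟨rfl, hlm⟩
  · push_cast
    ring
  · rw [(by exact_mod_cast hlm : (l + m : ℝ) = -1)]
    norm_num

end HalfArea

namespace IsReflexive

variable {P : Set (Fin 2 → ℝ)} (hP : IsReflexive P)
include hP

lemma exists_isLeast_polarDual {a : ℤ} (ha : a * a = 1) (hmem : ![-a, 0] ∈ latticePoints P) :
    ∃ m, IsLeast {b : ℤ | ![a, b] ∈ latticePoints (polarDual P)} m := by
  have hne : ![-a, 0] ≠ 0 := fun h0 => by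
    have : a = 0 := by simpa using congr_fun h0 0
    simp [this] at ha
  obtain ⟨u, hu, hua⟩ := hP.exists_dotProduct_eq_neg_one hmem hne
  have hu0 : u 0 = a := by
    simp only [dotProduct, Fin.sum_univ_two, Matrix.cons_val_zero, Matrix.cons_val_one] at hua
    linear_combination (-u 0) * ha - a * hua
  have hu' : u = ![u 0, u 1] := by ext i; fin_cases i <;> rfl
  have hinj : Function.Injective fun b : ℤ => ![a, b] := fun b c hbc => by
    simpa using congr_fun hbc 1
  obtain ⟨m, hm, hle⟩ := Set.exists_min_image {b : ℤ | ![a, b] ∈ latticePoints (polarDual P)} id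
    (hP.2.2.finite_latticePoints.preimage hinj.injOn)
    ⟨u 1, by rwa [Set.mem_ofPred_eq, ← hu0, ← hu']⟩
  exact ⟨m, hm, hle⟩

section UpperHalf

variable {l m : ℤ} (hpos : ![1, 0] ∈ latticePoints P) (hneg : ![-1, 0] ∈ latticePoints P)
  (hl : IsLeast {b : ℤ | ![-1, b] ∈ latticePoints (polarDual P)} l)
  (hm : IsLeast {b : ℤ | ![1, b] ∈ latticePoints (polarDual P)} m)

include hl hm

lemma neg_two_le_add_mul {z : Fin 2 → ℤ} (hz : z ∈ latticePoints P) : -2 ≤ (l + m) * z 1 := by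
  have h₁ := hP.mem_latticePoints_iff.1 hz _ hl.1
  have h₂ := hP.mem_latticePoints_iff.1 hz _ hm.1
  simp only [dotProduct, Fin.sum_univ_two, Matrix.cons_val_zero, Matrix.cons_val_one] at h₁ h₂
  linarith

lemma neg_two_le_add : -2 ≤ l + m := by
  obtain ⟨z, hz, hz1⟩ := hP.exists_dotProduct_neg (c := ![0, -1]) (by simp)
  have := hP.neg_two_le_add_mul hl hm hz
  simp only [dotProduct, Fin.sum_univ_two, Matrix.cons_val_zero, Matrix.cons_val_one] at hz1
  nlinarith

include hpos hneg

lemma mem_latticePoints_polarDual_cases {u : Fin 2 → ℤ} (hu : u ∈ latticePoints (polarDual P)) :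
    (u 0 = -1 ∧ l ≤ u 1) ∨ (u 0 = 0 ∧ -1 ≤ u 1) ∨ (u 0 = 1 ∧ m ≤ u 1) := by
  have h₁ := hP.mem_latticePoints_iff.1 hpos u hu
  have h₂ := hP.mem_latticePoints_iff.1 hneg u hu
  simp only [dotProduct, Fin.sum_univ_two, Matrix.cons_val_zero, Matrix.cons_val_one] at h₁ h₂
  have hu' : u = ![u 0, u 1] := by ext i; fin_cases i <;> rfl
  rcases (by lia : u 0 = -1 ∨ u 0 = 0 ∨ u 0 = 1) with h0 | h0 | h0
  · rw [hu', h0] at hu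
    exact .inl ⟨h0, hl.2 hu⟩
  · refine .inr (.inl ⟨h0, ?_⟩)
    obtain ⟨z, hz, hz1⟩ := hP.exists_dotProduct_neg (c := ![0, -1]) (by simp)
    have huz := hP.mem_latticePoints_iff.1 hz u hu
    simp only [dotProduct, Fin.sum_univ_two, Matrix.cons_val_zero, Matrix.cons_val_one, h0]
      at hz1 huz
    nlinarith
  · rw [hu', h0] at hu
    exact .inr (.inr ⟨h0, hm.2 hu⟩)

lemma add_eq_neg_one (hbot : ![0, -1] ∉ latticePoints (polarDual P)) : l + m = -1 := by
  refine le_antisymm ?_ ?_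
  · obtain ⟨u, hu, hul⟩ := hP.polarDual.exists_dotProduct_neg (c := ![l, 1]) (by simp)
    have hu' : u = ![u 0, u 1] := by ext i; fin_cases i <;> rfl
    simp only [dotProduct, Fin.sum_univ_two, Matrix.cons_val_zero, Matrix.cons_val_one] at hul
    rcases hP.mem_latticePoints_polarDual_cases hpos hneg hl hm hu with
      ⟨h0, h1⟩ | ⟨h0, h1⟩ | ⟨h0, h1⟩ <;> rw [h0] at hul
    · lia
    · rw [hu', h0, show u 1 = -1 by lia] at hu
      exact absurd hu hbot
    · lia
  · rw [hP.polarDual.mem_latticePoints_iff, hP.polarDual_polarDual] at hbot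
    simp only [dotProduct, Fin.sum_univ_two, Matrix.cons_val_zero, Matrix.cons_val_one,
      not_forall, not_le] at hbot
    obtain ⟨z, hz, hz1⟩ := hbot
    have := hP.neg_two_le_add_mul hl hm hz
    nlinarith

lemma mem_iff_of_nonneg {z : Fin 2 → ℝ} (hz : 0 ≤ z 1) :
    z ∈ P ↔ (z 0 ∈ Set.Icc (-1 - m * z 1) (1 + l * z 1)) ∧
      (![0, -1] ∈ latticePoints (polarDual P) → z 1 ≤ 1) := by
  have hdot (u : Fin 2 → ℤ) : coeLat u ⬝ᵥ z = u 0 * z 0 + u 1 * z 1 := Fin.sum_univ_two _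
  rw [hP.mem_iff]
  simp only [hdot]
  constructor
  · intro h
    have hzl := h _ hl.1
    have hzm := h _ hm.1
    simp only [Matrix.cons_val_zero, Matrix.cons_val_one, Int.cast_neg, Int.cast_one] at hzl hzm
    exact ⟨⟨by linarith, by linarith⟩, fun hbot => by simpa using h _ hbot⟩
  · rintro ⟨⟨hzm, hzl⟩, hz1⟩ u hu
    rcases hP.mem_latticePoints_polarDual_cases hpos hneg hl hm hu with
      ⟨h0, h1⟩ | ⟨h0, h1⟩ | ⟨h0, h1⟩ <;> rw [h0]
    · have : (l : ℝ) * z 1 ≤ u 1 * z 1 := by gcongr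
      push_cast
      linarith
    · rcases h1.eq_or_lt with h1 | h1
      · have hbot : ![0, -1] = u := by ext i; fin_cases i <;> simp [h0, h1]
        simpa [← h1] using hz1 (hbot ▸ hu)
      · have : (0 : ℝ) ≤ u 1 := by exact_mod_cast h1
        push_cast
        nlinarith
    · have : (m : ℝ) * z 1 ≤ u 1 * z 1 := by gcongr
      push_cast
      linarith

theorem exists_inter_eq_trapezoid :
    ∃ h : ℤ, (h = 1 ∧ -2 ≤ l + m ∨ h = 2 ∧ l + m = -1) ∧
      P ∩ {z | 0 ≤ z 1} = trapezoid l m h := by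
  by_cases hbot : ![0, -1] ∈ latticePoints (polarDual P)
  · refine ⟨1, .inl ⟨rfl, hP.neg_two_le_add hl hm⟩, ?_⟩
    ext z
    simp only [Set.mem_inter_iff, Set.mem_ofPred_eq, trapezoid, Set.mem_Icc, Int.cast_one]
    refine ⟨fun ⟨hz, hz1⟩ => ?_, fun ⟨⟨hz1, hz1'⟩, hz0⟩ => ?_⟩
    · obtain ⟨hz0, hz1'⟩ := (hP.mem_iff_of_nonneg hpos hneg hl hm hz1).1 hz
      exact ⟨⟨hz1, hz1' hbot⟩, hz0⟩
    · exact ⟨(hP.mem_iff_of_nonneg hpos hneg hl hm hz1).2 ⟨hz0, fun _ => hz1'⟩, hz1⟩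
  · have hlm := hP.add_eq_neg_one hpos hneg hl hm hbot
    refine ⟨2, .inr ⟨rfl, hlm⟩, ?_⟩
    ext z
    simp only [Set.mem_inter_iff, Set.mem_ofPred_eq, trapezoid, Set.mem_Icc, Int.cast_ofNat]
    refine ⟨fun ⟨hz, hz1⟩ => ?_, fun ⟨⟨hz1, _⟩, hz0⟩ => ?_⟩
    · obtain ⟨hz0, -⟩ := (hP.mem_iff_of_nonneg hpos hneg hl hm hz1).1 hz
      -- The two slanted sides meet at height two because their slopes add up to `-1`.
      have hlm' : (l + m : ℝ) = -1 := by exact_mod_cast hlm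
      have hlmz : (l + m) * z 1 = -z 1 := by rw [hlm', neg_one_mul]
      exact ⟨⟨hz1, by linarith [hz0.1, hz0.2]⟩, hz0⟩
    · exact ⟨(hP.mem_iff_of_nonneg hpos hneg hl hm hz1).2 ⟨hz0, fun h => absurd h hbot⟩, hz1⟩

end UpperHalf

theorem v2_add_v2_polarDual_of_mem (hpos : ![1, 0] ∈ latticePoints P)
    (hneg : ![-1, 0] ∈ latticePoints P) : v2 P + v2 (polarDual P) = 12 := by
  have hR := hP.image_latticeMap reflection_mul_reflection
  have hposR : ![1, 0] ∈ latticePoints (latticeMap reflection '' P) := by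
    rwa [mem_latticePoints_image_reflection, neg_zero]
  have hnegR : ![-1, 0] ∈ latticePoints (latticeMap reflection '' P) := by
    rwa [mem_latticePoints_image_reflection, neg_zero]
  obtain ⟨l, hl⟩ := hP.exists_isLeast_polarDual (a := -1) rfl (by rwa [neg_neg])
  obtain ⟨m, hm⟩ := hP.exists_isLeast_polarDual (a := 1) rfl hneg
  obtain ⟨l', hl'⟩ := hR.exists_isLeast_polarDual (a := -1) rfl (by rwa [neg_neg])
  obtain ⟨m', hm'⟩ := hR.exists_isLeast_polarDual (a := 1) rfl hnegR
  obtain ⟨h, hh, htop⟩ := hP.exists_inter_eq_trapezoid hpos hneg hl hm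
  obtain ⟨h', hh', hbot⟩ := hR.exists_inter_eq_trapezoid hposR hnegR hl' hm'
  have hll : l + l' ≤ 0 := le_neg_iff_add_nonpos_right.1 (hl.2 <| by
    simpa only [Set.mem_ofPred_eq, polarDual_image_reflection, mem_latticePoints_image_reflection]
      using hl'.1)
  have hmm : m + m' ≤ 0 := le_neg_iff_add_nonpos_right.1 (hm.2 <| by
    simpa only [Set.mem_ofPred_eq, polarDual_image_reflection, mem_latticePoints_image_reflection]
      using hm'.1)
  obtain ⟨hpos, hlm⟩ := height_pos_and_neg_two_le_add_mul hh
  obtain ⟨hpos', hlm'⟩ := height_pos_and_neg_two_le_add_mul hh'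
  rw [eq_union_image_reflection htop hbot, v2_trapezoid_union hpos hlm hpos' hlm',
    v2_polarDual_trapezoid_union hpos hlm hpos' hlm' (by exact_mod_cast hll)
      (by exact_mod_cast hmm)]
  linarith [half_area_add_half_dual_area_eq_six (hh.imp_left And.left),
    half_area_add_half_dual_area_eq_six (hh'.imp_left And.left)]

open scoped Matrix in
theorem v2_add_v2_polarDual_of_hasAntipodalPair (hpair : HasAntipodalPair P) :
    v2 P + v2 (polarDual P) = 12 := by
  obtain ⟨v, hv, hv0, hneg⟩ := hpair
  obtain ⟨u, -, huv⟩ := hP.exists_dotProduct_eq_neg_one hv hv0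
  rw [dotProduct, Fin.sum_univ_two] at huv
  have hAB : !![v 0, u 1; v 1, -u 0] * !![-u 0, -u 1; -v 1, v 0] = 1 := by
    rw [Matrix.mul_fin_two, Matrix.one_fin_two]
    congr! <;> linarith
  have hBv : !![-u 0, -u 1; -v 1, v 0] *ᵥ v = ![1, 0] := by
    ext i
    fin_cases i <;> simp [Matrix.mulVec, dotProduct, Fin.sum_univ_two] <;> linarith
  rw [← v2_image_latticeMap hAB P, ← v2_polarDual_image_latticeMap hAB P]
  refine (hP.image_latticeMap hAB).v2_add_v2_polarDual_of_mem ?_ ?_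
  · exact ⟨_, hv, by rw [latticeMap_coeLat, hBv]⟩
  · exact ⟨_, hneg, by rw [latticeMap_coeLat, Matrix.mulVec_neg, hBv]; simp⟩

end IsReflexive

theorem reflexive_polygon_twelve (Δ : Set (Fin 2 → ℝ))
    (hΔ : IsReflexive Δ) (hdim : dimSet Δ = 2) :
    v2 Δ + v2 (polarDual Δ) = 12 := by
  rcases hΔ.hasAntipodalPair_or_polarDual with hpair | hpair
  · exact hΔ.v2_add_v2_polarDual_of_hasAntipodalPair hpair
  · simpa only [hΔ.polarDual_polarDual, add_comm]
      using hΔ.polarDual.v2_add_v2_polarDual_of_hasAntipodalPair hpair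

end
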